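/- There exists a graph G on 7 vertices with χ_g(G) = 4 and χ_cg(G) = 5; in particular the connected game chromatic number can strictly exceed the game chromatic number. -/

import Mathlib

/-- Colour `c` is legal at vertex `v` in the vertex colouring game: `v` is uncoloured
and no neighbour of `v` has colour `c`. -/
def VLegal {V : Type} (G : SimpleGraph V) {k : ℕ} (col : V → Option (Fin k))
    (v : V) (c : Fin k) : Prop :=
  col v = none ∧ ∀ u, G.Adj u v → col u ≠ some c

/-- Some uncoloured vertex has all `k` colours among its coloured neighbours, so it is
impossible to colour: Breaker's winning condition. -/
def VStuck {V : Type} (G : SimpleGraph V) {k : ℕ} (col : V → Option (Fin k)) : Prop :=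
  ∃ v, col v = none ∧ ∀ c : Fin k, ∃ u, G.Adj u v ∧ col u = some c

/-- `VMakerWins G k col t` : Maker has a winning strategy in the vertex colouring game
on `G` with `k` colours from position `col` (`t = true`: Maker's turn, `t = false`:
Breaker's turn).  Maker wins when the whole graph gets coloured, no vertex ever having
become impossible to colour. -/
inductive VMakerWins {V : Type} [DecidableEq V] (G : SimpleGraph V) (k : ℕ) :
    (V → Option (Fin k)) → Bool → Prop
  | done (col : V → Option (Fin k)) (t : Bool) (h : ∀ v, col v ≠ none) :
      VMakerWins G k col t
  | maker (col : V → Option (Fin k)) (hns : ¬ VStuck G col) (v : V) (c : Fin k)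
      (hc : VLegal G col v c)
      (ih : VMakerWins G k (Function.update col v (some c)) false) :
      VMakerWins G k col true
  | breaker (col : V → Option (Fin k)) (hns : ¬ VStuck G col) (hne : ∃ v, col v = none)
      (ih : ∀ v c, VLegal G col v c →
        VMakerWins G k (Function.update col v (some c)) true) :
      VMakerWins G k col false

/-- Colour `c` is legal at `v` in the connected vertex colouring game: legal as in the
ordinary game, and additionally `v` must be adjacent to an already-coloured vertex
unless no vertex is coloured yet. -/
def CLegal {V : Type} (G : SimpleGraph V) {k : ℕ} (col : V → Option (Fin k))
    (v : V) (c : Fin k) : Prop :=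
  VLegal G col v c ∧ ((∀ u, col u = none) ∨ ∃ u, G.Adj u v ∧ col u ≠ none)

/-- `CMakerWins G k col t` : Maker has a winning strategy in the connected vertex
colouring game on `G` with `k` colours from position `col`. -/
inductive CMakerWins {V : Type} [DecidableEq V] (G : SimpleGraph V) (k : ℕ) :
    (V → Option (Fin k)) → Bool → Prop
  | done (col : V → Option (Fin k)) (t : Bool) (h : ∀ v, col v ≠ none) :
      CMakerWins G k col t
  | maker (col : V → Option (Fin k)) (hns : ¬ VStuck G col) (v : V) (c : Fin k)
      (hc : CLegal G col v c)
      (ih : CMakerWins G k (Function.update col v (some c)) false) :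
      CMakerWins G k col true
  | breaker (col : V → Option (Fin k)) (hns : ¬ VStuck G col)
      (hmv : ∃ v c, CLegal G col v c)
      (ih : ∀ v c, CLegal G col v c →
        CMakerWins G k (Function.update col v (some c)) true) :
      CMakerWins G k col false

/-- The game chromatic number of `G`: the least `k` for which Maker has a winning
strategy in the vertex colouring game on `G` with `k` colours. -/
noncomputable def gameChromaticNumber {V : Type} [DecidableEq V] (G : SimpleGraph V) : ℕ :=
  sInf {k : ℕ | VMakerWins G k (fun _ => none) true}

/-- The connected game chromatic number of `G`: the least `k` for which Maker has a
winning strategy in the connected vertex colouring game on `G` with `k` colours. -/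
noncomputable def connGameChromaticNumber {V : Type} [DecidableEq V] (G : SimpleGraph V) : ℕ :=
  sInf {k : ℕ | CMakerWins G k (fun _ => none) true}

/-!
The vertices `7, 1, 2, 5` form a `K₄`, so fewer than four colours never suffice.

With four colours in the unrestricted game, Maker opens at `2` and answers every move of Breaker on
the other vertex of its class in the partition `{4, 7}, {1, 3}, {2}, {5, 6}`. He copies Breaker's
colour, unless this is the colour of `2`, in which case he uses a colour reserved for the class. The
colour reserved for a class thus stays legal on it for as long as it is uncoloured.

In every 4-colouring `5` and `6` agree, `3` agrees with `1` or `2`, and `4` agrees with `7` or `2`.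
In the connected game Breaker's first answer ensures that, up to the symmetry exchanging `1` and
`7`, the first two coloured vertices are `1, 2` or `4, 5`. Now Maker would have to settle `3`,
respectively `6`, but it has no coloured neighbour yet, and the move of Maker that provides one lets
Breaker give it a colour that no 4-colouring allows. In the case `1, 2`, Maker's only delay is to
colour `4` like `2`, and Breaker answers it at `5`.

With five colours only `1` and `7`, the vertices of degree five, can become impossible to colour.
They are adjacent, so Maker can colour one with his first move and the other with his second.
-/

open scoped Finset

section General

variable {V : Type} {G : SimpleGraph V} {k : ℕ} {col : V → Option (Fin k)} {v : V} {c : Fin k}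

theorem not_vStuck_iff :
    ¬ VStuck G col ↔ ∀ v, col v = none → ∃ c, VLegal G col v c := by
  refine ⟨fun h v hv => ?_, ?_⟩
  · by_contra! hc
    refine h ⟨v, hv, fun c => ?_⟩
    by_contra! hu
    exact hc c ⟨hv, hu⟩
  · rintro h ⟨v, hv, hc⟩
    obtain ⟨c, -, hlegal⟩ := h v hv
    obtain ⟨u, hadj, hu⟩ := hc c
    exact hlegal u hadj hu

/-- The coloured vertices of the position `col` are properly coloured; the inductive types
`VMakerWins` and `CMakerWins` do not demand this of the position they start from. -/
def IsProperPosition (G : SimpleGraph V) (col : V → Option (Fin k)) : Prop :=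
  ∀ u v c, G.Adj u v → col u = some c → col v ≠ some c

/-- The position `col` extends to a proper colouring of the whole graph. -/
def Completable (G : SimpleGraph V) (col : V → Option (Fin k)) : Prop :=
  ∃ C : G.Coloring (Fin k), ∀ v c, col v = some c → C v = c

theorem isProperPosition_none : IsProperPosition G (fun _ => none : V → Option (Fin k)) := by
  simp [IsProperPosition]

theorem IsProperPosition.completable (hcol : IsProperPosition G col) (h : ∀ v, col v ≠ none) :
    Completable G col := by
  choose C hC using fun v => Option.ne_none_iff_exists'.1 (h v)
  refine ⟨.mk C fun {u v} hadj heq => hcol u v (C u) hadj (hC u) (heq ▸ hC v), fun v c hv => ?_⟩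
  exact Option.some_injective _ ((hC v).symm.trans hv)

theorem Completable.colorable (h : Completable G col) : G.Colorable k :=
  ⟨h.choose⟩

variable [DecidableEq V]

theorem IsProperPosition.update (hcol : IsProperPosition G col) (hc : VLegal G col v c) :
    IsProperPosition G (Function.update col v (some c)) := by
  intro u w d hadj hu hw
  by_cases huv : u = v
  · subst huv
    rw [Function.update_of_ne hadj.ne'] at hw
    rw [Function.update_self, Option.some_inj] at hu
    exact hc.2 w hadj.symm (hu ▸ hw)
  rw [Function.update_of_ne huv] at hu
  by_cases hwv : w = v
  · subst hwv
    rw [Function.update_self, Option.some_inj] at hw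
    exact hc.2 u hadj (hw ▸ hu)
  · rw [Function.update_of_ne hwv] at hw
    exact hcol u w d hadj hu hw

theorem Completable.of_update (hv : col v = none)
    (h : Completable G (Function.update col v (some c))) : Completable G col := by
  obtain ⟨C, hC⟩ := h
  refine ⟨C, fun w d hw => hC w d ?_⟩
  rwa [Function.update_of_ne]
  rintro rfl
  simp [hv] at hw

theorem VMakerWins.completable {t : Bool} (h : VMakerWins G k col t)
    (hcol : IsProperPosition G col) : Completable G col := by
  induction h with
  | done col _ h => exact hcol.completable h
  | maker col _ v c hc _ ih => exact (ih (hcol.update hc)).of_update hc.1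
  | breaker col hns hne _ ih =>
    obtain ⟨v, hv⟩ := hne
    obtain ⟨c, hc⟩ := not_vStuck_iff.1 hns v hv
    exact (ih v c hc (hcol.update hc)).of_update hc.1

theorem CMakerWins.completable {t : Bool} (h : CMakerWins G k col t)
    (hcol : IsProperPosition G col) : Completable G col := by
  induction h with
  | done col _ h => exact hcol.completable h
  | maker col _ v c hc _ ih => exact (ih (hcol.update hc.1)).of_update hc.1.1
  | breaker col _ hmv _ ih =>
    obtain ⟨v, c, hc⟩ := hmv
    exact (ih v c hc (hcol.update hc.1)).of_update hc.1.1

theorem setOf_update_eq_none_ssubset (hv : col v = none) :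
    {w | Function.update col v (some c) w = none} ⊂ {w | col w = none} := by
  refine Set.ssubset_iff_exists.2 ⟨fun w hw => ?_, v, hv, by simp⟩
  by_cases hwv : w = v
  · exact hwv ▸ hv
  · simpa [hwv] using hw

end General

section Pairing

variable {V : Type} {G : SimpleGraph V} {k : ℕ} {col : V → Option (Fin k)} {z : V}
  {π : G.Coloring (Fin k)} {σ : Equiv.Perm (Fin k)} {p : V → V}

/-- `π` is a proper colouring with colour classes `{v, p v}`, the only singleton being `{z}`, that
Maker can realise by answering each move `v` at `p v`: every vertex outside two classes not
containing `z` sees a neighbour of `z` in each of them. -/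
structure IsPairing (π : G.Coloring (Fin k)) (p : V → V) (z : V) : Prop where
  eq_self_iff : ∀ v, p v = v ↔ v = z
  class_iff : ∀ u v, π u = π v ↔ v = u ∨ v = p u
  exists_adj : ∀ u v, u ≠ z → v ≠ z → π u ≠ π v → ∃ w, π w = π v ∧ G.Adj w u ∧ G.Adj w z

/-- No colour class of `π` is partly coloured in the position `col`. -/
def ClassClosed (π : G.Coloring (Fin k)) (col : V → Option (Fin k)) : Prop :=
  ∀ v w, π v = π w → col v = none → col w = none

/-- The position `col` agrees with the proper colouring `π`, its colours renamed by `σ`, except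
that vertices not adjacent to `z` may have received the colour of `z` instead. -/
def FollowsUpTo (π : G.Coloring (Fin k)) (z : V) (σ : Equiv.Perm (Fin k))
    (col : V → Option (Fin k)) : Prop :=
  ∀ v c, col v = some c → c = σ (π v) ∨ c = σ (π z) ∧ ¬ G.Adj v z

theorem FollowsUpTo.vLegal (h : FollowsUpTo π z σ col) {v : V} (hv : col v = none)
    (hvz : π v ≠ π z) : VLegal G col v (σ (π v)) := by
  refine ⟨hv, fun u hadj hu => ?_⟩
  rcases h u _ hu with heq | ⟨heq, -⟩
  · exact π.valid hadj (σ.injective heq).symm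
  · exact hvz (σ.injective heq)

theorem ClassClosed.apply_ne (hcl : ClassClosed π col) (hz : col z ≠ none) {v : V}
    (hv : col v = none) : π v ≠ π z :=
  fun heq => hz (hcl v z heq hv)

/-- A class colour in use is no longer available to Breaker: every uncoloured vertex sees it at a
neighbour of `z`, where the colour of `z` cannot have replaced it. -/
theorem FollowsUpTo.apply_ne_of_vLegal (h : FollowsUpTo π z σ col) (hp : IsPairing π p z)
    (hcl : ClassClosed π col) (hz : col z ≠ none) {u v : V} {x : Fin k} (hx : VLegal G col u x)
    (hv : col v ≠ none) (hvz : v ≠ z) : σ (π v) ≠ x := by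
  rintro rfl
  have huz : u ≠ z := fun heq => hz (heq ▸ hx.1)
  have huv : π u ≠ π v := fun heq => hv (hcl u v heq hx.1)
  obtain ⟨w, hwv, hwu, hwz⟩ := hp.exists_adj u v huz hvz huv
  obtain ⟨d, hd⟩ := Option.ne_none_iff_exists'.1 fun hw => hv (hcl w v hwv hw)
  have hdw : d = σ (π w) := (h w d hd).resolve_right fun hdz => hdz.2 hwz
  exact hx.2 w hwu (by rw [hd, hdw, hwv])

variable [DecidableEq V]

theorem ClassClosed.update_pair (hcl : ClassClosed π col) (hp : IsPairing π p z) (u : V)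
    (c d : Fin k) :
    ClassClosed π (Function.update (Function.update col u (some c)) (p u) (some d)) := by
  have free_iff (w : V) :
      Function.update (Function.update col u (some c)) (p u) (some d) w = none ↔
        π u ≠ π w ∧ col w = none := by
    by_cases hwp : w = p u
    · simp [hwp, (hp.class_iff u (p u)).2 (.inr rfl)]
    by_cases hwu : w = u
    · subst hwu
      simp [hwp]
    · simp [hwp, hwu, hp.class_iff u w]
  intro v w hvw hv
  rw [free_iff] at hv ⊢
  exact ⟨hvw ▸ hv.1, hcl v w hvw hv.2⟩

theorem FollowsUpTo.update_self (h : FollowsUpTo π z σ col) (v : V) :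
    FollowsUpTo π z σ (Function.update col v (some (σ (π v)))) := by
  intro w c hw
  by_cases hwv : w = v
  · subst hwv
    exact .inl (by simpa [eq_comm] using hw)
  · exact h w c (by simpa [hwv] using hw)

theorem FollowsUpTo.update_centre (h : FollowsUpTo π z σ col) (hz : col z = some (σ (π z)))
    {u : V} (hx : VLegal G col u (σ (π z))) :
    FollowsUpTo π z σ (Function.update col u (some (σ (π z)))) := by
  intro v c hv
  by_cases hvu : v = u
  · subst hvu
    exact .inr ⟨by simpa [eq_comm] using hv, fun hvz => hx.2 z hvz.symm hz⟩
  · exact h v c (by simpa [hvu] using hv)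

theorem FollowsUpTo.exists_update (h : FollowsUpTo π z σ col) (hp : IsPairing π p z)
    (hcl : ClassClosed π col) (hz : col z = some (σ (π z))) {u : V} {x : Fin k}
    (hx : VLegal G col u x) :
    ∃ τ : Equiv.Perm (Fin k), τ (π z) = σ (π z) ∧
      FollowsUpTo π z τ (Function.update col u (some x)) := by
  by_cases hxz : x = σ (π z)
  · subst hxz
    exact ⟨σ, rfl, h.update_centre hz hx⟩
  have hz_ne : col z ≠ none := by simp [hz]
  have huz : π u ≠ π z := hcl.apply_ne hz_ne hx.1
  have hτz : Equiv.swap (σ (π u)) x (σ (π z)) = σ (π z) :=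
    Equiv.swap_apply_of_ne_of_ne (σ.injective.ne huz.symm) (Ne.symm hxz)
  refine ⟨σ.trans (Equiv.swap (σ (π u)) x), hτz, fun v c hv => ?_⟩
  by_cases hvu : v = u
  · subst hvu
    exact .inl (by simpa [eq_comm] using hv)
  rw [Function.update_of_ne hvu] at hv
  have hv_ne : col v ≠ none := by simp [hv]
  rcases h v c hv with rfl | ⟨rfl, hvz⟩
  · have hvu : π v ≠ π u := fun heq => hv_ne (hcl u v heq.symm hx.1)
    have hvx : σ (π v) ≠ x := by
      by_cases hvz : v = z
      · exact hvz ▸ Ne.symm hxz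
      · exact h.apply_ne_of_vLegal hp hcl hz_ne hx hv_ne hvz
    exact .inl (Equiv.swap_apply_of_ne_of_ne (σ.injective.ne hvu) hvx).symm
  · exact .inr ⟨hτz.symm, hvz⟩

theorem FollowsUpTo.vMakerWins [Finite V] (h : FollowsUpTo π z σ col) (hp : IsPairing π p z)
    (hcl : ClassClosed π col) (hz : col z = some (σ (π z))) : VMakerWins G k col false := by
  induction hfree : {v | col v = none} using WellFoundedLT.induction generalizing col σ with
  | _ s ih
  subst hfree
  have hne {v : V} (hv : col v = none) : π v ≠ π z := hcl.apply_ne (by simp [hz]) hv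
  by_cases hdone : ∀ v, col v ≠ none
  · exact .done col false hdone
  refine .breaker col (not_vStuck_iff.2 fun v hv => ⟨_, h.vLegal hv (hne hv)⟩)
    (by simpa using hdone) fun u x hx => ?_
  obtain ⟨τ, hτz, hτ⟩ := h.exists_update hp hcl hz hx
  have hlegal {v : V} (hv : Function.update col u (some x) v = none) :
      VLegal G (Function.update col u (some x)) v (τ (π v)) :=
    hτ.vLegal hv (hne ((setOf_update_eq_none_ssubset hx.1).subset hv))
  have hclass : π u = π (p u) := (hp.class_iff u (p u)).2 (.inr rfl)
  have hzu : z ≠ u := fun heq => hne hx.1 (heq ▸ rfl)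
  have hzp : z ≠ p u := fun heq => hne hx.1 (heq ▸ hclass)
  have hpu : p u ≠ u := fun heq => hzu ((hp.eq_self_iff u).1 heq).symm
  have hfree : Function.update col u (some x) (p u) = none := by
    simpa [hpu] using hcl u (p u) hclass hx.1
  refine .maker _ (not_vStuck_iff.2 fun v hv => ⟨_, hlegal hv⟩) (p u) _ (hlegal hfree) ?_
  refine ih _ ((setOf_update_eq_none_ssubset hfree).trans (setOf_update_eq_none_ssubset hx.1))
    (hτ.update_self _) (hcl.update_pair hp u _ _) ?_ rfl
  simpa [hzp, hzu, hτz] using hz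

theorem IsPairing.vMakerWins [Finite V] (hp : IsPairing π p z) :
    VMakerWins G k (fun _ => none) true := by
  have hstart : FollowsUpTo π z 1 (fun _ => none) := by simp [FollowsUpTo]
  have hlegal (v : V) : VLegal G (fun _ => none) v (π v) := by simp [VLegal]
  refine .maker _ (not_vStuck_iff.2 fun v _ => ⟨_, hlegal v⟩) z (π z) (hlegal z) ?_
  refine (hstart.update_self z).vMakerWins hp ?_ (by simp)
  have hcl : ClassClosed π (fun _ => none) := by simp [ClassClosed]
  simpa [(hp.eq_self_iff z).2 rfl] using hcl.update_pair hp z (π z) (π z)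

end Pairing

section Connected

variable {V : Type} {G : SimpleGraph V} {k : ℕ} {col : V → Option (Fin k)}

theorem exists_vLegal_of_card_lt {v : V} {S : Finset V} (hcard : #S < k)
    (hS : ∀ u, G.Adj u v → col u ≠ none → u ∈ S) (hv : col v = none) : ∃ c, VLegal G col v c := by
  by_contra! hstuck
  have hseen (c : Fin k) : ∃ u, G.Adj u v ∧ col u = some c := by
    by_contra! hu
    exact hstuck c ⟨hv, hu⟩
  choose f hadj hf using hseen
  have hinj : Function.Injective f := fun c d hcd =>
    Option.some_injective _ (by rw [← hf c, ← hf d, hcd])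
  have hle : #(Finset.univ : Finset (Fin k)) ≤ #S :=
    Finset.card_le_card_of_injOn f (fun c _ => hS _ (hadj c) (by simp [hf])) hinj.injOn
  rw [Finset.card_univ, Fintype.card_fin] at hle
  omega

theorem exists_uncoloured_adj_coloured (hG : G.Preconnected) {u v : V} (hu : col u ≠ none)
    (hv : col v = none) : ∃ w, col w = none ∧ ∃ x, G.Adj x w ∧ col x ≠ none := by
  obtain ⟨⟨⟨x, w⟩, hadj⟩, -, hx, hw⟩ :=
    (hG u v).some.exists_boundary_dart {w | col w ≠ none} hu (by simpa using hv)
  exact ⟨w, by simpa using hw, x, hadj, hx⟩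

variable [DecidableEq V]

theorem cMakerWins_of_degree_lt [G.LocallyFinite] [Finite V] (hG : G.Preconnected)
    (hcol : ∃ v, col v ≠ none) (hdeg : ∀ v, col v = none → G.degree v < k) (t : Bool) :
    CMakerWins G k col t := by
  induction hfree : {v | col v = none} using WellFoundedLT.induction generalizing col t with
  | _ s ih
  subst hfree
  by_cases hdone : ∀ v, col v ≠ none
  · exact .done col t hdone
  push Not at hdone
  have hcolour (v : V) (hv : col v = none) : ∃ c, VLegal G col v c :=
    exists_vLegal_of_card_lt (hdeg v hv)
      (fun u hu _ => (G.mem_neighborFinset v u).2 hu.symm) hv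
  have hns : ¬ VStuck G col := not_vStuck_iff.2 hcolour
  obtain ⟨u, hu⟩ := hcol
  obtain ⟨w, hw⟩ := hdone
  obtain ⟨v, hv, hadj⟩ := exists_uncoloured_adj_coloured hG hu hw
  obtain ⟨c, hc⟩ := hcolour v hv
  have next {w : V} {d : Fin k} (hd : VLegal G col w d) (t : Bool) :
      CMakerWins G k (Function.update col w (some d)) t :=
    have hssub := setOf_update_eq_none_ssubset hd.1
    ih _ hssub ⟨w, by simp⟩ (fun x hx => hdeg x (hssub.subset hx)) t rfl
  cases t with
  | true => exact .maker col hns v c ⟨hc, .inr hadj⟩ (next hc false)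
  | false => exact .breaker col hns ⟨v, c, hc, .inr hadj⟩ fun w d hd => next hd.1 true

/-- Maker colours the two exceptional vertices first. -/
theorem cMakerWins_of_adj [G.LocallyFinite] [Finite V] (hG : G.Preconnected) (hk : 3 ≤ k)
    {x y : V} (hxy : G.Adj x y) (hdeg : ∀ v, v ≠ x → v ≠ y → G.degree v < k) :
    CMakerWins G k (fun _ => none) true := by
  let a : Fin k := ⟨0, by omega⟩
  refine .maker _ (not_vStuck_iff.2 fun v _ => ⟨a, by simp [VLegal]⟩) x a
    ⟨by simp [VLegal], .inl fun _ => rfl⟩ ?_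
  set col₁ : V → Option (Fin k) := Function.update (fun _ => none) x (some a) with hcol₁
  have hcolour₁ (v : V) : col₁ v = none → ∃ c, VLegal G col₁ v c :=
    exists_vLegal_of_card_lt (S := {x}) (by simp; omega)
      (by simp +contextual [hcol₁, Function.update_apply])
  have hadj : ∃ u, G.Adj u y ∧ col₁ u ≠ none := ⟨x, hxy, by simp [hcol₁]⟩
  obtain ⟨b, hb⟩ := hcolour₁ y (by simp [hcol₁, hxy.ne'])
  refine .breaker _ (not_vStuck_iff.2 hcolour₁) ⟨y, b, hb, .inr hadj⟩ fun v c _ => ?_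
  set col₂ := Function.update col₁ v (some c) with hcol₂
  have hx : col₂ x ≠ none := by
    simp only [hcol₂, hcol₁, Function.update_apply]
    grind
  have hcolour₂ (w : V) : col₂ w = none → ∃ d, VLegal G col₂ w d :=
    exists_vLegal_of_card_lt (S := {x, v}) (Finset.card_le_two.trans_lt hk) fun u _ hu => by
      simp only [hcol₂, hcol₁, Function.update_apply] at hu
      grind
  by_cases hy : col₂ y = none
  · obtain ⟨d, hd⟩ := hcolour₂ y hy
    refine .maker _ (not_vStuck_iff.2 hcolour₂) y d ⟨hd, .inr ⟨x, hxy, hx⟩⟩ ?_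
    refine cMakerWins_of_degree_lt hG ⟨y, by simp⟩ (fun w hw => hdeg w ?_ ?_) false
    · rintro rfl
      simp [hxy.ne, hx] at hw
    · rintro rfl
      simp at hw
  · refine cMakerWins_of_degree_lt hG ⟨x, hx⟩ (fun w hw => hdeg w ?_ ?_) true
    · rintro rfl
      exact hx hw
    · rintro rfl
      exact hy hw

end Connected

section Symmetry

variable {V W : Type} {G : SimpleGraph V} {H : SimpleGraph W} {k : ℕ} {col : V → Option (Fin k)}

theorem vLegal_comp_iso_iff (e : H ≃g G) {w : W} {c : Fin k} :
    VLegal H (col ∘ e) w c ↔ VLegal G col (e w) c := by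
  simp only [VLegal, e.surjective.forall, e.map_adj_iff, Function.comp_apply]

theorem cLegal_comp_iso_iff (e : H ≃g G) {w : W} {c : Fin k} :
    CLegal H (col ∘ e) w c ↔ CLegal G col (e w) c := by
  simp only [CLegal, vLegal_comp_iso_iff, e.surjective.forall, e.surjective.exists, e.map_adj_iff,
    Function.comp_apply]

theorem vStuck_comp_iso_iff (e : H ≃g G) : VStuck H (col ∘ e) ↔ VStuck G col := by
  simp only [VStuck, e.surjective.exists, e.map_adj_iff, Function.comp_apply]

variable [DecidableEq V] [DecidableEq W]

theorem CMakerWins.comp_iso {t : Bool} (h : CMakerWins G k col t) (e : H ≃g G) :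
    CMakerWins H k (col ∘ e) t := by
  have update_comp (col : V → Option (Fin k)) (w : W) (c : Fin k) :
      Function.update col (e w) (some c) ∘ e = Function.update (col ∘ e) w (some c) :=
    Function.update_comp_eq_of_injective col e.injective w (some c)
  induction h with
  | done col t h => exact .done _ t fun w => h (e w)
  | maker col hns v c hc _ ih =>
    obtain ⟨w, rfl⟩ := e.surjective v
    exact .maker _ (mt (vStuck_comp_iso_iff e).1 hns) w c ((cLegal_comp_iso_iff e).2 hc)
      (update_comp col w c ▸ ih)
  | breaker col hns hmv _ ih =>
    obtain ⟨v, c, hc⟩ := hmv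
    obtain ⟨w, rfl⟩ := e.surjective v
    refine .breaker _ (mt (vStuck_comp_iso_iff e).1 hns) ⟨w, c, (cLegal_comp_iso_iff e).2 hc⟩
      fun w d hd => ?_
    exact update_comp col w d ▸ ih (e w) d ((cLegal_comp_iso_iff e).1 hd)

end Symmetry

section Replies

variable {V : Type} [DecidableEq V] {G : SimpleGraph V} {k : ℕ} {col : V → Option (Fin k)}

theorem CMakerWins.exists_move (h : CMakerWins G k col true) (hfree : ∃ v, col v = none) :
    ∃ v c, CLegal G col v c ∧ CMakerWins G k (Function.update col v (some c)) false := by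
  cases h with
  | done _ _ h => exact absurd hfree (by simpa using h)
  | maker _ _ v c hc h => exact ⟨v, c, hc, h⟩

theorem CMakerWins.reply (h : CMakerWins G k col false) {v : V} {c : Fin k}
    (hc : CLegal G col v c) : CMakerWins G k (Function.update col v (some c)) true := by
  cases h with
  | done _ _ h => exact absurd hc.1.1 (h v)
  | breaker _ _ _ h => exact h v c hc

/-- The position in which only `u` and `v` are coloured, with colours `a` and `b`. -/
def twoColoured (u : V) (a : Fin k) (v : V) (b : Fin k) : V → Option (Fin k) :=
  Function.update (Function.update (fun _ => none) u (some a)) v (some b)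

theorem twoColoured_comm {u v : V} (huv : u ≠ v) (a b : Fin k) :
    twoColoured u a v b = twoColoured v b u a :=
  Function.update_comm huv _ _ _

theorem vLegal_update_none {u v : V} {a b : Fin k} (huv : u ≠ v) (hab : a ≠ b) :
    VLegal G (Function.update (fun _ => none) u (some a)) v b := by
  refine ⟨by simp [huv.symm], fun w _ hw => ?_⟩
  by_cases hwu : w = u
  · subst hwu
    exact hab (by simpa using hw)
  · simp [hwu] at hw

theorem isProperPosition_twoColoured {u v : V} {a b : Fin k} (huv : u ≠ v) (hab : a ≠ b) :
    IsProperPosition G (twoColoured u a v b) :=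
  (isProperPosition_none.update ⟨rfl, by simp⟩).update (vLegal_update_none huv hab)

theorem CMakerWins.reply_first {u v : V} {a b : Fin k}
    (h : CMakerWins G k (Function.update (fun _ => none) u (some a)) false) (huv : G.Adj u v)
    (hab : a ≠ b) : CMakerWins G k (twoColoured u a v b) true :=
  h.reply ⟨vLegal_update_none huv.ne hab, .inr ⟨u, huv, by simp⟩⟩

end Replies

section Witness

/-- The graph of the paper, with its vertex `7` encoded as `0 : Fin 7`. -/
def witness : SimpleGraph (Fin 7) :=
  .fromEdgeSet (({s(1, 4), s(1, 2), s(1, 0), s(1, 5), s(1, 6), s(3, 0), s(3, 6), s(4, 5), s(2, 6),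
    s(2, 5), s(6, 0), s(5, 0), s(0, 2)} : Finset (Sym2 (Fin 7))) : Set (Sym2 (Fin 7)))

instance : DecidableRel witness.Adj :=
  inferInstanceAs (DecidableRel (SimpleGraph.fromEdgeSet _).Adj)

theorem witness_connected : witness.Connected := by decide

theorem four_le_of_witness_colorable {k : ℕ} (h : witness.Colorable k) : 4 ≤ k := by
  have hclique : witness.IsClique ({0, 1, 2, 5} : Finset (Fin 7)) := by decide
  exact hclique.card_le_of_colorable h

/-- The partition `{0, 4}, {1, 3}, {2}, {5, 6}` of the vertices into independent sets. Maker answers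
on the partner of Breaker's vertex in the unrestricted game; in the connected game the partners
serve Breaker. -/
def partner : Fin 7 → Fin 7 := ![4, 3, 2, 1, 0, 6, 5]

theorem isPairing_partner :
    IsPairing (SimpleGraph.Coloring.mk ![0, 1, 2, 1, 0, 3, 3] (by decide) :
      witness.Coloring (Fin 4)) partner 2 where
  eq_self_iff := by decide
  class_iff := by decide
  exists_adj := by decide

theorem witness_coloring_eq (C : witness.Coloring (Fin 4)) :
    C 5 = C 6 ∧ (C 3 = C 1 ∨ C 3 = C 2) ∧ (C 4 = C 0 ∨ C 4 = C 2) := by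
  have hne (u v : Fin 7) (h : witness.Adj u v) : C u ≠ C v := C.valid h
  have pigeonhole : ∀ a b c d e : Fin 4, a ≠ b → a ≠ c → b ≠ c → d ≠ a → d ≠ b → d ≠ c →
      e ≠ d → e = a ∨ e = b ∨ e = c := by decide
  have of_ne_five (e : Fin 4) : e ≠ C 5 → e = C 0 ∨ e = C 1 ∨ e = C 2 :=
    pigeonhole (C 0) (C 1) (C 2) (C 5) e (hne 0 1 (by decide)) (hne 0 2 (by decide))
      (hne 1 2 (by decide)) (hne 5 0 (by decide)) (hne 5 1 (by decide)) (hne 5 2 (by decide))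
  have h56 : C 5 = C 6 := by
    by_contra h
    have := of_ne_five (C 6) (Ne.symm h)
    have := hne 6 0 (by decide)
    have := hne 6 1 (by decide)
    have := hne 6 2 (by decide)
    tauto
  refine ⟨h56, ?_, ?_⟩
  · have := of_ne_five (C 3) (h56 ▸ hne 3 6 (by decide))
    have := hne 3 0 (by decide)
    tauto
  · have := of_ne_five (C 4) (hne 4 5 (by decide))
    have := hne 4 1 (by decide)
    tauto

/-- The vertices `u` and `v` are coloured, with different colours. -/
def ColouredDifferently {V : Type} {k : ℕ} (col : V → Option (Fin k)) (u v : V) : Prop :=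
  col u ≠ none ∧ col v ≠ none ∧ col u ≠ col v

/-- Some `4`-colouring constraint of `witness_coloring_eq` is violated. -/
def Spoiled (col : Fin 7 → Option (Fin 4)) : Prop :=
  ColouredDifferently col 5 6 ∨
    (ColouredDifferently col 3 1 ∧ ColouredDifferently col 3 2) ∨
    (ColouredDifferently col 4 0 ∧ ColouredDifferently col 4 2)

theorem Spoiled.not_completable {col : Fin 7 → Option (Fin 4)} (h : Spoiled col) :
    ¬ Completable witness col := by
  rintro ⟨C, hC⟩
  have hne {u v : Fin 7} (h : ColouredDifferently col u v) : C u ≠ C v := by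
    obtain ⟨a, ha⟩ := Option.ne_none_iff_exists'.1 h.1
    obtain ⟨b, hb⟩ := Option.ne_none_iff_exists'.1 h.2.1
    rw [hC u a ha, hC v b hb]
    rintro rfl
    exact h.2.2 (ha.trans hb.symm)
  obtain ⟨h56, h3, h4⟩ := witness_coloring_eq C
  rcases h with h | ⟨h31, h32⟩ | ⟨h40, h42⟩
  · exact hne h h56
  · exact h3.elim (hne h31) (hne h32)
  · exact h4.elim (hne h40) (hne h42)

/-- Breaker can spoil the position `col` by a move at the vertex `w` in the connected game. -/
def SpoilableAt (col : Fin 7 → Option (Fin 4)) (w : Fin 7) : Prop :=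
  ∃ d, CLegal witness col w d ∧ Spoiled (Function.update col w (some d))

theorem SpoilableAt.not_cMakerWins {col : Fin 7 → Option (Fin 4)} {w : Fin 7}
    (h : SpoilableAt col w) (hcol : IsProperPosition witness col) :
    ¬ CMakerWins witness 4 col false := by
  obtain ⟨d, hd, hspoiled⟩ := h
  exact fun hwin => hspoiled.not_completable ((hwin.reply hd).completable (hcol.update hd.1))

instance (col : Fin 7 → Option (Fin 4)) (v : Fin 7) (c : Fin 4) :
    Decidable (CLegal witness col v c) :=
  inferInstanceAs (Decidable ((_ ∧ _) ∧ _))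

instance (col : Fin 7 → Option (Fin 4)) (u v : Fin 7) : Decidable (ColouredDifferently col u v) :=
  inferInstanceAs (Decidable (_ ∧ _ ∧ _))

instance (col : Fin 7 → Option (Fin 4)) : Decidable (Spoiled col) :=
  inferInstanceAs (Decidable (_ ∨ _ ∨ _))

instance (col : Fin 7 → Option (Fin 4)) (w : Fin 7) : Decidable (SpoilableAt col w) :=
  inferInstanceAs (Decidable (∃ d, CLegal witness col w d ∧ Spoiled _))

/-- Every move open to Maker is at a neighbour of `6`, and makes `6` accessible to Breaker. -/
theorem spoilableAt_of_four_five : ∀ a b v c, a ≠ b → CLegal witness (twoColoured 4 a 5 b) v c →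
    SpoilableAt (Function.update (twoColoured 4 a 5 b) v (some c)) 6 := by
  decide +kernel

theorem spoilableAt_partner_of_one_two : ∀ a b v c, a ≠ b →
    CLegal witness (twoColoured 1 a 2 b) v c → (v = 4 → c ≠ b) →
    SpoilableAt (Function.update (twoColoured 1 a 2 b) v (some c)) (partner v) := by
  decide +kernel

/-- Maker cannot protect `3`, which becomes accessible only by his move at `0` or `6`; that move
takes a third colour and leaves Breaker a fourth one for `3`. -/
theorem spoilableAt_three_of_one_two_four_five : ∀ a b x, a ≠ b → x ≠ a → x ≠ b →
    let col := Function.update (Function.update (twoColoured 1 a 2 b) 4 (some b)) 5 (some x)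
    ∀ v c, CLegal witness col v c → SpoilableAt (Function.update col v (some c)) 3 := by
  decide +kernel

theorem not_cMakerWins_twoColoured_four_five {a b : Fin 4} (hab : a ≠ b) :
    ¬ CMakerWins witness 4 (twoColoured 4 a 5 b) true := by
  intro h
  obtain ⟨v, c, hc, hwin⟩ := h.exists_move ⟨0, by simp [twoColoured]⟩
  have hproper : IsProperPosition witness (twoColoured 4 a 5 b) :=
    isProperPosition_twoColoured (by decide) hab
  exact (spoilableAt_of_four_five a b v c hab hc).not_cMakerWins (hproper.update hc.1) hwin

theorem not_cMakerWins_twoColoured_one_two {a b : Fin 4} (hab : a ≠ b) :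
    ¬ CMakerWins witness 4 (twoColoured 1 a 2 b) true := by
  intro h
  obtain ⟨v, c, hc, hwin⟩ := h.exists_move ⟨0, by simp [twoColoured]⟩
  have hproper : IsProperPosition witness (twoColoured 1 a 2 b) :=
    isProperPosition_twoColoured (by decide) hab
  by_cases hvc : v = 4 → c ≠ b
  · exact (spoilableAt_partner_of_one_two a b v c hab hc hvc).not_cMakerWins
      (hproper.update hc.1) hwin
  push Not at hvc
  obtain ⟨rfl, rfl⟩ := hvc
  obtain ⟨x, hxa, hxc⟩ : ∃ x, x ≠ a ∧ x ≠ c :=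
    Fin.exists_ne_and_ne_of_two_lt a c (by decide)
  have hx : CLegal witness (Function.update (twoColoured 1 a 2 c) 4 (some c)) 5 x := by
    clear * - hab hxa hxc
    revert a c x
    decide +kernel
  obtain ⟨w, d, hd, hwin_reply⟩ := (hwin.reply hx).exists_move ⟨0, by simp [twoColoured]⟩
  exact (spoilableAt_three_of_one_two_four_five a c x hab hxa hxc w d hd).not_cMakerWins
    (((hproper.update hc.1).update hx.1).update hd.1) hwin_reply

/-- The automorphism of `witness` exchanging the vertices `1` and `7` of the paper. -/
def witnessFlip : witness ≃g witness where
  toEquiv := Equiv.swap 0 1 * Equiv.swap 3 4 * Equiv.swap 5 6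
  map_rel_iff' := by decide

theorem not_cMakerWins_opening_of_one_two_four_five {v : Fin 7} (c : Fin 4)
    (hv : v = 1 ∨ v = 2 ∨ v = 4 ∨ v = 5) :
    ¬ CMakerWins witness 4 (Function.update (fun _ => none) v (some c)) false := by
  intro h
  obtain ⟨d, hd⟩ := exists_ne c
  rcases hv with rfl | rfl | rfl | rfl
  · exact not_cMakerWins_twoColoured_one_two hd.symm (h.reply_first (by decide) hd.symm)
  · refine not_cMakerWins_twoColoured_one_two hd ?_
    exact twoColoured_comm (by decide : (2 : Fin 7) ≠ 1) c d ▸ h.reply_first (by decide) hd.symm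
  · exact not_cMakerWins_twoColoured_four_five hd.symm (h.reply_first (by decide) hd.symm)
  · refine not_cMakerWins_twoColoured_four_five hd ?_
    exact twoColoured_comm (by decide : (5 : Fin 7) ≠ 4) c d ▸ h.reply_first (by decide) hd.symm

theorem not_cMakerWins_opening (v : Fin 7) (c : Fin 4) :
    ¬ CMakerWins witness 4 (Function.update (fun _ => none) v (some c)) false := by
  intro h
  obtain ⟨w, rfl⟩ := witnessFlip.surjective v
  have hflip : CMakerWins witness 4 (Function.update (fun _ => none) w (some c)) false := by
    have hwin := h.comp_iso witnessFlip
    rwa [Function.update_comp_eq_of_injective _ witnessFlip.injective] at hwin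
  have hcover : ∀ w, (w = 1 ∨ w = 2 ∨ w = 4 ∨ w = 5) ∨ (witnessFlip w = 1 ∨
      witnessFlip w = 2 ∨ witnessFlip w = 4 ∨ witnessFlip w = 5) := by decide
  rcases hcover w with hw | hw
  · exact not_cMakerWins_opening_of_one_two_four_five c hw hflip
  · exact not_cMakerWins_opening_of_one_two_four_five c hw h

theorem witness_not_cMakerWins_four : ¬ CMakerWins witness 4 (fun _ => none) true := by
  intro h
  obtain ⟨v, c, -, hwin⟩ := h.exists_move ⟨0, rfl⟩
  exact not_cMakerWins_opening v c hwin

theorem witness_cMakerWins_five : CMakerWins witness 5 (fun _ => none) true :=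
  cMakerWins_of_adj witness_connected.preconnected (by decide) (x := 0) (y := 1) (by decide)
    (by decide)

theorem gameChromaticNumber_witness : gameChromaticNumber witness = 4 :=
  IsLeast.csInf_eq ⟨isPairing_partner.vMakerWins, fun _ h =>
    four_le_of_witness_colorable (h.completable isProperPosition_none).colorable⟩

theorem connGameChromaticNumber_witness : connGameChromaticNumber witness = 5 := by
  refine IsLeast.csInf_eq ⟨witness_cMakerWins_five, fun k h => ?_⟩
  have hk : 4 ≤ k := four_le_of_witness_colorable (h.completable isProperPosition_none).colorable
  refine Nat.lt_of_le_of_ne hk ?_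
  rintro rfl
  exact witness_not_cMakerWins_four h

end Witness

/-- There is a graph `G` on 7 vertices with game chromatic number
`χ_g(G) = 4` and connected game chromatic number `χ_cg(G) = 5`; in particular the
connected game chromatic number can strictly exceed the game chromatic number. -/
theorem exists_graph_chromatic_lt_connected :
    ∃ G : SimpleGraph (Fin 7),
      gameChromaticNumber G = 4 ∧ connGameChromaticNumber G = 5 ∧
      gameChromaticNumber G < connGameChromaticNumber G := by
  refine ⟨witness, gameChromaticNumber_witness, connGameChromaticNumber_witness, ?_⟩
  rw [gameChromaticNumber_witness, connGameChromaticNumber_witness]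
  norm_num
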